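/- arXiv:2305.17295 — 2 statements merged into one kernel-verified Lean document; each statement's English description precedes it below -/
import Mathlib

section
/- Suppose that h₂(g₂(ŷ₁)) lies in the range of f for every ŷ₁ ∈ 𝒴₁, and h₂(ŷ₂) lies in the range of f for every ŷ₂ ∈ 𝒴₂. Then for every distortion level D > 0, encoding directly from the input has the same minimal achievable rate as either choice of intermediate layer: R_{Y₂}(D;T) = R_{XY₂}(D;T) = R_{XY₁}(D;T) = R_{Y₁}(D;T). -/
open scoped BigOperators

/-- Joint distribution P(a,b) = p(a)·k(a)(b) induced by a source `p` and a channel `k`,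
as a real number. -/
noncomputable def jointP {A B : Type*} [Fintype A] [Fintype B] (p : PMF A) (k : A → PMF B)
    (a : A) (b : B) : ℝ :=
  (p a * k a b).toReal

/-- Marginal distribution of the second coordinate of the joint induced by `(p, k)`. -/
noncomputable def margSnd {A B : Type*} [Fintype A] [Fintype B] (p : PMF A) (k : A → PMF B)
    (b : B) : ℝ :=
  ∑ a, jointP p k a b

/-- Mutual information I(A;B) = ∑_{a,b} P(a,b)·log(P(a,b)/(P(a)·P(b))) of the joint
induced by `(p, k)`; the convention 0·log 0 = 0 holds automatically in Lean. -/
noncomputable def mutualInfo {A B : Type*} [Fintype A] [Fintype B] (p : PMF A)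
    (k : A → PMF B) : ℝ :=
  ∑ a, ∑ b, jointP p k a b * Real.log (jointP p k a b / ((p a).toReal * margSnd p k b))

/-- Expected distortion E[d(A,B)] under the joint induced by `(p, k)`. -/
noncomputable def expDist {A B : Type*} [Fintype A] [Fintype B] (p : PMF A) (k : A → PMF B)
    (d : A → B → ℝ) : ℝ :=
  ∑ a, ∑ b, jointP p k a b * d a b

/-- Rate-distortion function: infimum of mutual information over all channels `A → PMF B`
meeting the expected-distortion constraint `≤ D`. -/
noncomputable def rate {A B : Type*} [Fintype A] [Fintype B] (p : PMF A) (d : A → B → ℝ)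
    (D : ℝ) : ℝ :=
  sInf { r : ℝ | ∃ k : A → PMF B, expDist p k d ≤ D ∧ r = mutualInfo p k }

/-- Conditional probability P(A = a | B = b) under the joint induced by `(p, k)`. -/
noncomputable def condProb {A B : Type*} [Fintype A] [Fintype B] (p : PMF A) (k : A → PMF B)
    (a : A) (b : B) : ℝ :=
  jointP p k a b / margSnd p k b

/-!
Mutual information is the Kullback–Leibler divergence of the joint law of source and output from the
product of its marginals, so processing the source and the output by functions cannot increase it.
Replacing the source `X` by a statistic `g(X)` through which the distortion factors keeps the rate:
a channel from `g(X)` is a channel from `X` with the same rate and distortion, and conversely a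
channel from `X` becomes a channel from `g(X)` by disintegrating the joint law of `g(X)` and the
output. Relabelling the output shows that two reproduction alphabets offering the same distortions
have the same rate as well.
-/

section JointLaw

variable {A B A' B' : Type*}

/-- The joint law of a source `p` and the output of a channel `k`, as a probability mass function on
pairs. The product of `p` and `q` is `jointLaw p fun _ => q`. -/
noncomputable def jointLaw (p : PMF A) (k : A → PMF B) : PMF (A × B) :=
  p.bind fun a => (k a).map (Prod.mk a)

theorem jointLaw_apply (p : PMF A) (k : A → PMF B) (x : A × B) :
    jointLaw p k x = p x.1 * k x.1 x.2 := by
  classical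
  obtain ⟨a, b⟩ := x
  rw [jointLaw, PMF.bind_apply, tsum_eq_single a]
  · rw [PMF.map_apply, tsum_eq_single b] <;> simp +contextual [eq_comm]
  · intro a' ha'
    simp [PMF.map_apply, ha'.symm]

theorem jointLaw_map_fst (p : PMF A) (k : A → PMF B) : (jointLaw p k).map Prod.fst = p := by
  simp only [jointLaw, PMF.map_bind, PMF.map_comp, Function.comp_def]
  exact (congrArg p.bind (funext fun a => (k a).map_const a)).trans p.bind_pure

theorem jointLaw_map_snd (p : PMF A) (k : A → PMF B) :
    (jointLaw p k).map Prod.snd = p.bind k := by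
  simp only [jointLaw, PMF.map_bind, PMF.map_comp, Function.comp_def]
  exact congrArg p.bind (funext fun a => (k a).map_id)

theorem jointLaw_map_prodMap_id (p : PMF A) (k : A → PMF B) (φ : B → B') :
    (jointLaw p k).map (Prod.map id φ) = jointLaw p fun a => (k a).map φ := by
  simp only [jointLaw, PMF.map_bind, PMF.map_comp]
  rfl

theorem jointLaw_comp_map (p : PMF A) (g : A → A') (k : A' → PMF B) :
    (jointLaw p (k ∘ g)).map (Prod.map g id) = jointLaw (p.map g) k := by
  simp only [jointLaw, PMF.map_bind, PMF.map_comp, PMF.bind_map]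
  rfl

theorem jointLaw_const_map (p : PMF A) (q : PMF B) (g : A → A') (φ : B → B') :
    (jointLaw p fun _ => q).map (Prod.map g φ) = jointLaw (p.map g) fun _ => q.map φ := by
  simp only [jointLaw, PMF.map_bind, PMF.map_comp, PMF.bind_map]
  rfl

theorem support_jointLaw_subset (p : PMF A) (k : A → PMF B) :
    (jointLaw p k).support ⊆ (jointLaw p fun _ => p.bind k).support := by
  intro x hx
  rw [PMF.mem_support_iff, jointLaw_apply] at hx ⊢
  have hk : x.2 ∈ (p.bind k).support :=
    (p.mem_support_bind_iff k x.2).2 ⟨x.1, left_ne_zero_of_mul hx, right_ne_zero_of_mul hx⟩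
  exact mul_ne_zero (left_ne_zero_of_mul hx) hk

theorem map_fst_apply (q : PMF (A × B)) (a : A) : q.map Prod.fst a = ∑' b, q (a, b) := by
  classical
  rw [PMF.map_apply, ENNReal.tsum_prod', tsum_eq_single a]
  · simp only [if_true]
  · intro a' ha'
    simp only [ha'.symm, if_false, tsum_zero]

theorem exists_jointLaw_map_fst_eq (q : PMF (A × B)) :
    ∃ k : A → PMF B, jointLaw (q.map Prod.fst) k = q := by
  have conditional : ∀ a, ∃ κ : PMF B, ∀ b, q.map Prod.fst a * κ b = q (a, b) := by
    intro a
    have hsum := map_fst_apply q a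
    by_cases h₀ : q.map Prod.fst a = 0
    · exact ⟨q.map Prod.snd, fun b => by
        rw [h₀, zero_mul, ENNReal.tsum_eq_zero.1 (hsum.symm.trans h₀) b]⟩
    · have htop := (q.map Prod.fst).apply_ne_top a
      refine ⟨PMF.normalize (fun b => q (a, b)) (hsum ▸ h₀) (hsum ▸ htop), fun b => ?_⟩
      rw [PMF.normalize_apply, ← hsum, mul_left_comm, ENNReal.mul_inv_cancel h₀ htop, mul_one]
  choose k hk using conditional
  exact ⟨k, PMF.ext fun x => (jointLaw_apply _ k x).trans (hk x.1 x.2)⟩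

theorem exists_jointLaw_map_prodMap_eq (p : PMF A) (k : A → PMF B) (g : A → A') :
    ∃ k' : A' → PMF B, (jointLaw p k).map (Prod.map g id) = jointLaw (p.map g) k' := by
  obtain ⟨k', hk'⟩ := exists_jointLaw_map_fst_eq ((jointLaw p k).map (Prod.map g id))
  have source : ((jointLaw p k).map (Prod.map g id)).map Prod.fst = p.map g := by
    rw [PMF.map_comp, Prod.map_fst', ← PMF.map_comp, jointLaw_map_fst]
  exact ⟨k', by rw [← source, hk']⟩

end JointLaw

section Divergence

open MeasureTheory InformationTheory

variable {α : Type*} [MeasurableSpace α]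

theorem toMeasure_absolutelyContinuous_of_support_subset [DiscreteMeasurableSpace α]
    {P Q : PMF α} (h : P.support ⊆ Q.support) : P.toMeasure ≪ Q.toMeasure := by
  intro s hs
  rw [PMF.toMeasure_apply_eq_zero_iff _ (.of_discrete)] at hs ⊢
  exact hs.mono_left h

theorem rnDeriv_toMeasure_apply [MeasurableSingletonClass α] {P Q : PMF α}
    (h : P.toMeasure ≪ Q.toMeasure) {a : α} (ha : Q a ≠ 0) :
    P.toMeasure.rnDeriv Q.toMeasure a = P a / Q a := by
  have key := Measure.setLIntegral_rnDeriv h {a}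
  rw [lintegral_singleton, PMF.toMeasure_apply_singleton _ _ (measurableSet_singleton a),
    PMF.toMeasure_apply_singleton _ _ (measurableSet_singleton a)] at key
  exact (ENNReal.eq_div_iff ha (Q.apply_ne_top a)).2 ((mul_comm _ _).trans key)

theorem toReal_klDiv_toMeasure [Fintype α] [MeasurableSingletonClass α] {P Q : PMF α}
    (h : P.support ⊆ Q.support) :
    (klDiv P.toMeasure Q.toMeasure).toReal
      = ∑ a, (P a).toReal * Real.log ((P a).toReal / (Q a).toReal) := by
  have hac : P.toMeasure ≪ Q.toMeasure :=
    toMeasure_absolutelyContinuous_of_support_subset h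
  rw [toReal_klDiv_of_measure_eq hac (by simp only [measure_univ]), PMF.integral_eq_sum]
  refine Finset.sum_congr rfl fun a _ => ?_
  rcases eq_or_ne (P a) 0 with ha | ha
  · simp only [ha, ENNReal.toReal_zero, zero_smul, zero_mul]
  · rw [llr, rnDeriv_toMeasure_apply hac (h ha), ENNReal.toReal_div, smul_eq_mul]

theorem toReal_klDiv_map_le [Finite α] [MeasurableSingletonClass α] {β : Type*}
    [MeasurableSpace β] {P Q : PMF α} (h : P.support ⊆ Q.support) {f : α → β}
    (hf : Measurable f) :
    (klDiv (P.map f).toMeasure (Q.map f).toMeasure).toReal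
      ≤ (klDiv P.toMeasure Q.toMeasure).toReal := by
  rw [← PMF.toMeasure_map f P hf, ← PMF.toMeasure_map f Q hf]
  exact ENNReal.toReal_mono
    (klDiv_ne_top (toMeasure_absolutelyContinuous_of_support_subset h) .of_finite)
    (klDiv_map_le _ _ hf)

end Divergence

section Channel

open MeasureTheory InformationTheory

variable {A B A' B' : Type*} [Fintype A] [Fintype B] [Fintype A'] [Fintype B']

theorem jointP_eq_toReal_jointLaw (p : PMF A) (k : A → PMF B) (a : A) (b : B) :
    jointP p k a b = (jointLaw p k (a, b)).toReal := by
  rw [jointP, jointLaw_apply]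

theorem margSnd_eq_toReal_bind (p : PMF A) (k : A → PMF B) (b : B) :
    margSnd p k b = (p.bind k b).toReal := by
  simp only [margSnd, jointP, PMF.bind_apply, tsum_fintype]
  exact (ENNReal.toReal_sum fun a _ =>
    ENNReal.mul_ne_top (p.apply_ne_top a) ((k a).apply_ne_top b)).symm

theorem expDist_eq_integral [MeasurableSpace A] [MeasurableSingletonClass A] [MeasurableSpace B]
    [MeasurableSingletonClass B] (p : PMF A) (k : A → PMF B) (d : A → B → ℝ) :
    expDist p k d = ∫ x, d x.1 x.2 ∂(jointLaw p k).toMeasure := by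
  simp only [expDist, jointP_eq_toReal_jointLaw, PMF.integral_eq_sum, Fintype.sum_prod_type,
    smul_eq_mul]

theorem mutualInfo_eq_expDist_log (p : PMF A) (k : A → PMF B) :
    mutualInfo p k = expDist p k fun a b => Real.log ((k a b).toReal / (p.bind k b).toReal) := by
  refine Finset.sum_congr rfl fun a _ => Finset.sum_congr rfl fun b _ => ?_
  rw [margSnd_eq_toReal_bind, jointP, ENNReal.toReal_mul]
  rcases eq_or_ne (p a).toReal 0 with ha | ha
  · simp only [ha, zero_mul]
  · rw [mul_div_mul_left _ _ ha]

theorem mutualInfo_eq_toReal_klDiv [MeasurableSpace A] [MeasurableSingletonClass A]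
    [MeasurableSpace B] [MeasurableSingletonClass B] (p : PMF A) (k : A → PMF B) :
    mutualInfo p k
      = (klDiv (jointLaw p k).toMeasure (jointLaw p fun _ => p.bind k).toMeasure).toReal := by
  simp only [mutualInfo, toReal_klDiv_toMeasure (support_jointLaw_subset p k),
    Fintype.sum_prod_type, jointP_eq_toReal_jointLaw, margSnd_eq_toReal_bind,
    jointLaw_apply p fun _ => p.bind k, ENNReal.toReal_mul]

section Processing

variable {p : PMF A} {k : A → PMF B} {p' : PMF A'} {k' : A' → PMF B'} {g : A → A'} {φ : B → B'}

theorem expDist_of_jointLaw_map_eq (h : (jointLaw p k).map (Prod.map g φ) = jointLaw p' k')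
    (d : A' → B' → ℝ) : expDist p' k' d = expDist p k fun a b => d (g a) (φ b) := by
  let _ : MeasurableSpace A := ⊤
  let _ : MeasurableSpace B := ⊤
  let _ : MeasurableSpace A' := ⊤
  let _ : MeasurableSpace B' := ⊤
  rw [expDist_eq_integral, expDist_eq_integral, ← h,
    ← PMF.toMeasure_map _ _ .of_discrete,
    integral_map Measurable.of_discrete.aemeasurable .of_discrete]
  rfl

theorem mutualInfo_le_of_jointLaw_map_eq
    (h : (jointLaw p k).map (Prod.map g φ) = jointLaw p' k') :
    mutualInfo p' k' ≤ mutualInfo p k := by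
  let _ : MeasurableSpace A := ⊤
  let _ : MeasurableSpace B := ⊤
  let _ : MeasurableSpace A' := ⊤
  let _ : MeasurableSpace B' := ⊤
  have source : p.map g = p' := by
    rw [← jointLaw_map_fst p' k', ← h, PMF.map_comp, Prod.map_fst', ← PMF.map_comp,
      jointLaw_map_fst]
  have output : (p.bind k).map φ = p'.bind k' := by
    rw [← jointLaw_map_snd p' k', ← h, PMF.map_comp, Prod.map_snd', ← PMF.map_comp,
      jointLaw_map_snd]
  have product : (jointLaw p fun _ => p.bind k).map (Prod.map g φ)
      = jointLaw p' fun _ => p'.bind k' := by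
    rw [jointLaw_const_map, source, output]
  rw [mutualInfo_eq_toReal_klDiv, mutualInfo_eq_toReal_klDiv, ← h, ← product]
  exact toReal_klDiv_map_le (support_jointLaw_subset p k) .of_discrete

end Processing

theorem mutualInfo_comp (p : PMF A) (g : A → A') (k : A' → PMF B) :
    mutualInfo p (k ∘ g) = mutualInfo (p.map g) k := by
  rw [mutualInfo_eq_expDist_log, mutualInfo_eq_expDist_log,
    expDist_of_jointLaw_map_eq (jointLaw_comp_map p g k), PMF.bind_map]
  rfl

theorem rate_eq_of_forall_exists_le {p : PMF A} {p' : PMF A'} {d : A → B → ℝ} {d' : A' → B' → ℝ}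
    (h : ∀ k : A → PMF B, ∃ k' : A' → PMF B',
      expDist p' k' d' ≤ expDist p k d ∧ mutualInfo p' k' ≤ mutualInfo p k)
    (h' : ∀ k' : A' → PMF B', ∃ k : A → PMF B,
      expDist p k d ≤ expDist p' k' d' ∧ mutualInfo p k ≤ mutualInfo p' k') (D : ℝ) :
    rate p d D = rate p' d' D := by
  apply csInf_eq_csInf_of_forall_exists_le
  · rintro _ ⟨k, hk, rfl⟩
    obtain ⟨k', hdist, hinfo⟩ := h k
    exact ⟨_, ⟨k', hdist.trans hk, rfl⟩, hinfo⟩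
  · rintro _ ⟨k', hk', rfl⟩
    obtain ⟨k, hdist, hinfo⟩ := h' k'
    exact ⟨_, ⟨k, hdist.trans hk', rfl⟩, hinfo⟩

theorem rate_comp_source (p : PMF A) (g : A → A') (d : A' → B → ℝ) (D : ℝ) :
    rate p (fun a b => d (g a) b) D = rate (p.map g) d D := by
  refine rate_eq_of_forall_exists_le (fun k => ?_) (fun k' => ?_) D
  · obtain ⟨k', hk'⟩ := exists_jointLaw_map_prodMap_eq p k g
    exact ⟨k', (expDist_of_jointLaw_map_eq hk' d).le, mutualInfo_le_of_jointLaw_map_eq hk'⟩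
  · exact ⟨k' ∘ g, (expDist_of_jointLaw_map_eq (jointLaw_comp_map p g k') d).ge,
      (mutualInfo_comp p g k').le⟩

theorem exists_expDist_eq_and_mutualInfo_le (p : PMF A) (k : A → PMF B) {d : A → B → ℝ}
    {d' : A → B' → ℝ} {φ : B → B'} (hφ : ∀ a b, d' a (φ b) = d a b) :
    ∃ k' : A → PMF B', expDist p k' d' = expDist p k d ∧ mutualInfo p k' ≤ mutualInfo p k := by
  have hmap := jointLaw_map_prodMap_id p k φ
  refine ⟨_, ?_, mutualInfo_le_of_jointLaw_map_eq hmap⟩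
  simp only [expDist_of_jointLaw_map_eq hmap, id, hφ]

theorem rate_eq_of_reproduction_maps (p : PMF A) {d : A → B → ℝ} {d' : A → B' → ℝ}
    (φ : B → B') (ψ : B' → B) (hφ : ∀ a b, d' a (φ b) = d a b) (hψ : ∀ a b', d a (ψ b') = d' a b')
    (D : ℝ) : rate p d D = rate p d' D :=
  rate_eq_of_forall_exists_le
    (fun k => (exists_expDist_eq_and_mutualInfo_le p k hφ).imp fun _ => .imp_left Eq.le)
    (fun k' => (exists_expDist_eq_and_mutualInfo_le p k' hψ).imp fun _ => .imp_left Eq.le) D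

end Channel

theorem direct_and_split_points_equal_rates_general
    {𝒳 𝒴₁ 𝒴₂ 𝒯 : Type*} [Fintype 𝒳] [Fintype 𝒴₁] [Fintype 𝒴₂]
    (pX : PMF 𝒳) (g₁ : 𝒳 → 𝒴₁) (g₂ : 𝒴₁ → 𝒴₂) (h₂ : 𝒴₂ → 𝒯) (dT : 𝒯 → 𝒯 → ℝ)
    (hr : Set.range h₂ ⊆ Set.range (h₂ ∘ g₂)) (D : ℝ) :
    rate ((pX.map g₁).map g₂) (fun y₂ yhat₂ => dT (h₂ y₂) (h₂ yhat₂)) D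
        = rate pX (fun x yhat₂ => dT (h₂ (g₂ (g₁ x))) (h₂ yhat₂)) D ∧
    rate pX (fun x yhat₂ => dT (h₂ (g₂ (g₁ x))) (h₂ yhat₂)) D
        = rate pX (fun x yhat₁ => dT (h₂ (g₂ (g₁ x))) (h₂ (g₂ yhat₁))) D ∧
    rate pX (fun x yhat₁ => dT (h₂ (g₂ (g₁ x))) (h₂ (g₂ yhat₁))) D
        = rate (pX.map g₁) (fun y₁ yhat₁ => dT (h₂ (g₂ y₁)) (h₂ (g₂ yhat₁))) D := by
  choose ψ hψ using Set.range_subset_iff.1 hr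
  refine ⟨?_, ?_, ?_⟩
  · rw [PMF.map_comp]
    exact (rate_comp_source pX (g₂ ∘ g₁) (fun y₂ yhat₂ => dT (h₂ y₂) (h₂ yhat₂)) D).symm
  · exact rate_eq_of_reproduction_maps pX ψ g₂ (fun _ y₂ => congrArg (dT _) (hψ y₂))
      (fun _ _ => rfl) D
  · exact rate_comp_source pX g₁ (fun y₁ yhat₁ => dT (h₂ (g₂ y₁)) (h₂ (g₂ yhat₁))) D

/-- With f = h₂ ∘ g₂ ∘ g₁, under the same range conditions, for every D > 0,
R_{Y₂}(D;T) = R_{XY₂}(D;T) = R_{XY₁}(D;T) = R_{Y₁}(D;T). -/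
theorem direct_and_split_points_equal_rates
    {𝒳 𝒴₁ 𝒴₂ 𝒯 : Type*} [Fintype 𝒳] [Fintype 𝒴₁] [Fintype 𝒴₂] [Fintype 𝒯]
    [Nonempty 𝒳] [Nonempty 𝒴₁] [Nonempty 𝒴₂] [Nonempty 𝒯]
    (pX : PMF 𝒳) (g₁ : 𝒳 → 𝒴₁) (g₂ : 𝒴₁ → 𝒴₂) (h₂ : 𝒴₂ → 𝒯)
    (dT : 𝒯 → 𝒯 → ℝ) (hdT : ∀ t t', 0 ≤ dT t t')
    (hr1 : ∀ yhat₁ : 𝒴₁, h₂ (g₂ yhat₁) ∈ Set.range (fun x => h₂ (g₂ (g₁ x))))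
    (hr2 : ∀ yhat₂ : 𝒴₂, h₂ yhat₂ ∈ Set.range (fun x => h₂ (g₂ (g₁ x))))
    (D : ℝ) (hD : 0 < D) :
    rate ((pX.map g₁).map g₂) (fun y₂ yhat₂ => dT (h₂ y₂) (h₂ yhat₂)) D
        = rate pX (fun x yhat₂ => dT (h₂ (g₂ (g₁ x))) (h₂ yhat₂)) D ∧
    rate pX (fun x yhat₂ => dT (h₂ (g₂ (g₁ x))) (h₂ yhat₂)) D
        = rate pX (fun x yhat₁ => dT (h₂ (g₂ (g₁ x))) (h₂ (g₂ yhat₁))) D ∧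
    rate pX (fun x yhat₁ => dT (h₂ (g₂ (g₁ x))) (h₂ (g₂ yhat₁))) D
        = rate (pX.map g₁) (fun y₁ yhat₁ => dT (h₂ (g₂ y₁)) (h₂ (g₂ yhat₁))) D := by
  exact direct_and_split_points_equal_rates_general pX g₁ g₂ h₂ dT
    (Set.range_subset_iff.2 fun y₂ => (hr2 y₂).imp' g₁ fun _ => id) D
end

section
/- Let D_X > 0 and suppose some channel k* ∈ ℛ_X(D_X;X) attains the minimal induced task distortion D_T^min = min 𝒟*_T(D_X;X). Then the minimal achievable rate of the supervised approach is upper-bounded by the input rate-distortion function: R_X(D_T^min;T) ≤ R_X(D_X;X). -/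
open scoped BigOperators

/-! The channel k* is feasible for the task constraint E[d_T(f(X), f(X̂))] ≤ D_T^min, because
D_T^min is the task distortion of k* itself, so its mutual information R_X(D_X;X) is one of the
values over which the infimum R_X(D_T^min;T) is taken. That infimum is a lower bound because mutual
information is nonnegative (Gibbs' inequality); the real `sInf` of a set that is not bounded below
would be the junk value `0`. -/

theorem sub_le_mul_log_div {x y : ℝ} (hx : 0 ≤ x) (hy : 0 ≤ y) (hxy : y = 0 → x = 0) :
    x - y ≤ x * Real.log (x / y) := by
  rcases eq_or_ne y 0 with rfl | hy₀
  · simp only [hxy rfl, sub_zero, zero_mul, le_refl]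
  · have hkl : y * InformationTheory.klFun (x / y) = x * Real.log (x / y) - (x - y) := by
      rw [InformationTheory.klFun_apply]
      field_simp
      ring
    have hkl_nonneg : 0 ≤ y * InformationTheory.klFun (x / y) :=
      mul_nonneg hy (InformationTheory.klFun_nonneg (div_nonneg hx hy))
    linarith

theorem sum_mul_log_div_nonneg {ι : Type*} {s : Finset ι} {P Q : ι → ℝ}
    (hP : ∀ i ∈ s, 0 ≤ P i) (hQ : ∀ i ∈ s, 0 ≤ Q i) (hPQ : ∀ i ∈ s, Q i = 0 → P i = 0)
    (hsum : ∑ i ∈ s, Q i ≤ ∑ i ∈ s, P i) :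
    0 ≤ ∑ i ∈ s, P i * Real.log (P i / Q i) :=
  calc
    0 ≤ ∑ i ∈ s, (P i - Q i) := by rwa [Finset.sum_sub_distrib, sub_nonneg]
    _ ≤ ∑ i ∈ s, P i * Real.log (P i / Q i) := Finset.sum_le_sum fun i hi =>
      sub_le_mul_log_div (hP i hi) (hQ i hi) (hPQ i hi)

theorem sum_pmf_toReal {A : Type*} [Fintype A] (p : PMF A) : ∑ a, (p a).toReal = 1 := by
  rw [← ENNReal.toReal_sum fun a _ => p.apply_ne_top a, ← tsum_fintype (L := .unconditional A),
    p.tsum_coe, ENNReal.toReal_one]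

section Channel

variable {A B : Type*} [Fintype A] [Fintype B] (p : PMF A) (k : A → PMF B)

theorem jointP_nonneg (a : A) (b : B) : 0 ≤ jointP p k a b :=
  ENNReal.toReal_nonneg

theorem margSnd_nonneg (b : B) : 0 ≤ margSnd p k b :=
  Finset.sum_nonneg fun a _ => jointP_nonneg p k a b

theorem jointP_le_margSnd (a : A) (b : B) : jointP p k a b ≤ margSnd p k b :=
  Finset.single_le_sum (f := fun a => jointP p k a b)
    (fun a _ => jointP_nonneg p k a b) (Finset.mem_univ a)

theorem jointP_eq_zero_of_mul_margSnd_eq_zero {a : A} {b : B}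
    (h : (p a).toReal * margSnd p k b = 0) : jointP p k a b = 0 := by
  rcases mul_eq_zero.mp h with hp | hmarg
  · rw [jointP, ENNReal.toReal_mul, hp, zero_mul]
  · exact le_antisymm (hmarg ▸ jointP_le_margSnd p k a b) (jointP_nonneg p k a b)

theorem sum_mul_margSnd_eq_sum_jointP :
    ∑ a, ∑ b, (p a).toReal * margSnd p k b = ∑ a, ∑ b, jointP p k a b :=
  calc
    ∑ a, ∑ b, (p a).toReal * margSnd p k b = ∑ b, margSnd p k b := by
      rw [← Finset.sum_mul_sum, sum_pmf_toReal, one_mul]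
    _ = ∑ a, ∑ b, jointP p k a b := Finset.sum_comm

theorem mutualInfo_nonneg : 0 ≤ mutualInfo p k := by
  rw [mutualInfo, ← Fintype.sum_prod_type']
  refine sum_mul_log_div_nonneg (fun _ _ => jointP_nonneg p k _ _)
    (fun _ _ => mul_nonneg ENNReal.toReal_nonneg (margSnd_nonneg p k _))
    (fun _ _ => jointP_eq_zero_of_mul_margSnd_eq_zero p k) ?_
  simp only [Fintype.sum_prod_type]
  exact (sum_mul_margSnd_eq_sum_jointP p k).le

variable {p k}

theorem rate_le_mutualInfo {d : A → B → ℝ} {D : ℝ} (hk : expDist p k d ≤ D) :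
    rate p d D ≤ mutualInfo p k := by
  refine csInf_le ⟨0, ?_⟩ ⟨k, hk, rfl⟩
  rintro _ ⟨k', -, rfl⟩
  exact mutualInfo_nonneg p k'

variable (p) in
/-- The set `ℛ(D)` of optimal channels for the distortion `d`: those meeting the constraint
`E[d(A,B)] ≤ D` whose mutual information equals the rate-distortion function. The reproduction
alphabet `B` may differ from the source alphabet `A`. -/
def optimalChannels (d : A → B → ℝ) (D : ℝ) : Set (A → PMF B) :=
  {k | expDist p k d ≤ D ∧ mutualInfo p k = rate p d D}

theorem supervised_le_input_rd_general {d : A → B → ℝ} {D : ℝ} (hk : k ∈ optimalChannels p d D)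
    (d' : A → B → ℝ) : rate p d' (expDist p k d') ≤ rate p d D :=
  (rate_le_mutualInfo le_rfl).trans_eq hk.2

end Channel

/-- If some X-optimal channel k* (distortion ≤ D_X at rate R_X(D_X;X))
attains the minimal induced task distortion D_T^min = min 𝒟*_T(D_X;X), then
R_X(D_T^min;T) ≤ R_X(D_X;X). Here f = h ∘ g. -/
theorem supervised_le_input_rd
    {𝒳 𝒴 𝒯 : Type*} [Fintype 𝒳] [Fintype 𝒴] [Fintype 𝒯]
    [Nonempty 𝒳] [Nonempty 𝒴] [Nonempty 𝒯]
    (pX : PMF 𝒳) (g : 𝒳 → 𝒴) (h : 𝒴 → 𝒯)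
    (dT : 𝒯 → 𝒯 → ℝ) (hdT : ∀ t t', 0 ≤ dT t t')
    (dX : 𝒳 → 𝒳 → ℝ) (hdX : ∀ x x', 0 ≤ dX x x')
    (DX : ℝ) (hDX : 0 < DX)
    (kstar : 𝒳 → PMF 𝒳)
    (hk_dist : expDist pX kstar dX ≤ DX)
    (hk_rate : mutualInfo pX kstar = rate pX dX DX)
    (DTmin : ℝ)
    (hattain : DTmin = expDist pX kstar (fun x xhat => dT (h (g x)) (h (g xhat))))
    (hmin : ∀ k : 𝒳 → PMF 𝒳, expDist pX k dX ≤ DX →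
      mutualInfo pX k = rate pX dX DX →
      DTmin ≤ expDist pX k (fun x xhat => dT (h (g x)) (h (g xhat)))) :
    rate pX (fun x xhat => dT (h (g x)) (h (g xhat))) DTmin ≤ rate pX dX DX :=
  hattain ▸ supervised_le_input_rd_general ⟨hk_dist, hk_rate⟩ _
end
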